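/- arXiv:alg-geom/9609021 — 4 statements merged into one kernel-verified Lean document; each statement's English description precedes it below -/
import Mathlib

section
/- Let n ≥ 1 be a natural number and ψ ∈ ℂ. There exists a vector (x₀, …, x_{n+1}) ∈ ℂ^{n+2}, not all of whose coordinates are zero, satisfying x_j^{n+1} = ψ · ∏_{i ≠ j} x_i for every j ∈ {0, …, n+1}, if and only if ψ^{n+2} = 1. -/
open scoped BigOperators

/-!
Multiplying the `j`-th equation by `x j` turns the system into `x j ^ (n + 2) = ψ * P` for all `j`,
where `P = ∏ i, x i`. If some coordinate is nonzero, then `ψ * P ≠ 0`, so `P ≠ 0`; the product of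
all the equations is `P ^ (n + 2) = ψ ^ (n + 2) * P ^ (n + 2)`, whence `ψ ^ (n + 2) = 1`.
Conversely, if `ψ ^ (n + 2) = 1`, the point `(ψ⁻¹, 1, …, 1)` is a solution.
-/

/-- The Dwork pencil hypersurface of degree `n+2` in `ℙ^{n+1}` is singular
(i.e., all partial derivatives have a common nonzero zero) iff `ψ^{n+2} = 1`. -/
theorem dwork_pencil_singular_iff (n : ℕ) (hn : 1 ≤ n) (ψ : ℂ) :
    (∃ x : Fin (n + 2) → ℂ, x ≠ 0 ∧
        ∀ j : Fin (n + 2), x j ^ (n + 1) = ψ * ∏ i ∈ Finset.univ.erase j, x i) ↔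
      ψ ^ (n + 2) = 1 := by
  constructor
  · rintro ⟨x, hx, h⟩
    have key : ∀ j, x j ^ (n + 2) = ψ * ∏ i, x i := fun j => by
      rw [← Finset.mul_prod_erase Finset.univ x (Finset.mem_univ j), pow_succ, h j]
      ring
    obtain ⟨k, hk⟩ := Function.ne_iff.mp hx
    have hP : ∏ i, x i ≠ 0 := fun h0 => by
      have hk' := key k
      rw [h0, mul_zero] at hk'
      exact hk (eq_zero_of_pow_eq_zero hk')
    have hprod : (∏ i, x i) ^ (n + 2) = ψ ^ (n + 2) * (∏ i, x i) ^ (n + 2) := by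
      rw [← mul_pow, ← Finset.prod_pow, Finset.prod_congr rfl fun j _ => key j]
      simp
    exact (mul_eq_right₀ (pow_ne_zero _ hP)).mp hprod.symm
  · intro h
    have hψ : ψ ≠ 0 := by
      rintro rfl
      simp at h
    let x : Fin (n + 2) → ℂ := Function.update 1 0 ψ⁻¹
    have hx : ∀ j, x j ≠ 0 ∧ x j ^ (n + 2) = 1 := fun j => by
      by_cases hj : j = 0
      · subst hj
        simp [x, hψ, h]
      · simp [x, hj]
    have hP : ∏ i, x i = ψ⁻¹ := by
      simp [x, Finset.prod_update_of_mem]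
    refine ⟨x, fun h0 => (hx 0).1 (congrFun h0 0), fun j => ?_⟩
    -- Both sides become `1` after multiplication by the nonzero coordinate `x j`.
    apply mul_left_cancel₀ (hx j).1
    rw [← pow_succ', (hx j).2, mul_left_comm, Finset.mul_prod_erase Finset.univ x
      (Finset.mem_univ j), hP, mul_inv_cancel₀ hψ]
end

section
/- Let A = ⊕_{d=0}^{m} A_d be a finite-dimensional graded commutative algebra over a field K with A_m ≠ 0 and dim_K A_0 = 1. If ε, ε′ : A → K are two linear functionals, each having graded kernel and nondegenerate associated bilinear form (x,y) ↦ ε(x·y), then dim_K A_m = 1 and ε′ = c·ε for some nonzero scalar c ∈ K. -/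
/-!
Since `A_m` is the top degree, `A_m * A_d = 0` for `d > 0`, while `A_0 = K • 1`; hence every
ideal generated by some `x ∈ A_m` is just `K • x`, and nondegeneracy forces `ε` to be injective
on `A_m` (`expectation_injOn_top`). So `A_m` is a line spanned by some `w` with `ε w ≠ 0`.
Correcting an element by a multiple of `w` puts it in the kernel of `ε`, and gradedness of the
kernel then shows that `ε` factors through the projection to `A_m` (`expectation_eq_proj_top`).
Two functionals factoring through the same line are proportional.
-/

theorem expectation_injOn_top {K A : Type*} [Field K] [CommRing A] [Algebra K A]
    (m : ℕ) (𝒜 : ℕ → Submodule K A) [GradedAlgebra 𝒜]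
    (hbound : ∀ d : ℕ, m < d → 𝒜 d = ⊥) (h0 : Module.finrank K (𝒜 0) = 1)
    (ε : A →ₗ[K] K) (hnondeg : ∀ x : A, (∀ y : A, ε (x * y) = 0) → x = 0)
    (x : A) (hx : x ∈ 𝒜 m) (hεx : ε x = 0) : x = 0 := by
  apply hnondeg
  intro y
  induction y using DirectSum.Decomposition.inductionOn 𝒜 with
  | zero => simp
  | add a b ha hb => rw [mul_add, map_add, ha, hb, add_zero]
  | @homogeneous d y =>
    rcases Nat.eq_zero_or_pos d with rfl | hd
    · have : Nontrivial A := by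
        by_contra hA
        rw [not_nontrivial_iff_subsingleton] at hA
        rw [Module.finrank_zero_of_subsingleton] at h0
        exact zero_ne_one h0
      have hone : (⟨1, SetLike.GradedOne.one_mem⟩ : 𝒜 0) ≠ 0 := by
        simp [Subtype.ext_iff]
      obtain ⟨c, rfl⟩ := (finrank_eq_one_iff_of_nonzero' _ hone).1 h0 y
      simp [hεx]
    · have h : x * (y : A) ∈ 𝒜 (m + d) := SetLike.GradedMul.mul_mem hx y.2
      rw [hbound _ (by omega), Submodule.mem_bot] at h
      rw [h, map_zero]

theorem expectation_eq_proj_top {K A : Type*} [Field K] [CommRing A] [Algebra K A]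
    (m : ℕ) (𝒜 : ℕ → Submodule K A) [GradedAlgebra 𝒜]
    (ε : A →ₗ[K] K) (hgraded : ∀ x : A, ε x = 0 → ∀ d : ℕ, ε (GradedAlgebra.proj 𝒜 d x) = 0)
    (w : A) (hw : w ∈ 𝒜 m) (hεw : ε w ≠ 0) (x : A) :
    ε x = ε (GradedAlgebra.proj 𝒜 m x) := by
  have hproj : ∀ z ∈ 𝒜 m, GradedAlgebra.proj 𝒜 m z = z := fun z hz => by
    rw [GradedAlgebra.proj_apply, DirectSum.decompose_of_mem_same 𝒜 hz]
  have hmem : GradedAlgebra.proj 𝒜 m x ∈ 𝒜 m := by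
    rw [GradedAlgebra.proj_apply]
    exact SetLike.coe_mem _
  -- `x - proj x` has no component in degree `m`, so after correcting it by `c • w` to lie in
  -- the kernel, its degree `m` component is `-c • w`, which must be killed by `ε`.
  have h := hgraded
    (x - GradedAlgebra.proj 𝒜 m x - (ε (x - GradedAlgebra.proj 𝒜 m x) / ε w) • w)
    (by rw [map_sub ε _ (_ • w), map_smul, smul_eq_mul, div_mul_cancel₀ _ hεw, sub_self]) m
  rw [map_sub (GradedAlgebra.proj 𝒜 m) _ (_ • w), map_sub (GradedAlgebra.proj 𝒜 m) x,
    map_smul, hproj _ hmem, hproj w hw, sub_self, zero_sub, map_neg, map_smul, smul_eq_mul,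
    div_mul_cancel₀ _ hεw, neg_eq_zero, map_sub] at h
  exact sub_eq_zero.1 h

/-- If `A = ⊕_{d=0}^m A_d` is a finite-dimensional graded commutative algebra over a
field with `A_m ≠ 0` and `dim A_0 = 1`, then any two graded expectation functions
(linear functionals with graded kernel and nondegenerate associated bilinear form)
differ by a nonzero scalar, and `dim A_m = 1`. -/
theorem graded_expectation_unique_up_to_scalar {K A : Type*} [Field K] [CommRing A]
    [Algebra K A] [FiniteDimensional K A]
    (m : ℕ) (𝒜 : ℕ → Submodule K A) [GradedAlgebra 𝒜]
    (hbound : ∀ d : ℕ, m < d → 𝒜 d = ⊥) (htop : 𝒜 m ≠ ⊥)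
    (h0 : Module.finrank K (𝒜 0) = 1)
    (ε ε' : A →ₗ[K] K)
    (hgraded : ∀ x : A, ε x = 0 → ∀ d : ℕ, ε (GradedAlgebra.proj 𝒜 d x) = 0)
    (hnondeg : ∀ x : A, (∀ y : A, ε (x * y) = 0) → x = 0)
    (hgraded' : ∀ x : A, ε' x = 0 → ∀ d : ℕ, ε' (GradedAlgebra.proj 𝒜 d x) = 0)
    (hnondeg' : ∀ x : A, (∀ y : A, ε' (x * y) = 0) → x = 0) :
    Module.finrank K (𝒜 m) = 1 ∧ ∃ c : K, c ≠ 0 ∧ ε' = c • ε := by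
  obtain ⟨w, hw, hw0⟩ := Submodule.exists_mem_ne_zero_of_ne_bot htop
  have hinj := expectation_injOn_top m 𝒜 hbound h0 ε hnondeg
  have hεw : ε w ≠ 0 := fun h => hw0 (hinj w hw h)
  have hεw' : ε' w ≠ 0 := fun h =>
    hw0 (expectation_injOn_top m 𝒜 hbound h0 ε' hnondeg' w hw h)
  have hspan : ∀ x ∈ 𝒜 m, (ε x / ε w) • w = x := fun x hx => by
    refine (sub_eq_zero.1 (hinj _ (sub_mem hx (Submodule.smul_mem _ _ hw)) ?_)).symm
    rw [map_sub, map_smul, smul_eq_mul, div_mul_cancel₀ _ hεw, sub_self]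
  refine ⟨?_, ε' w / ε w, div_ne_zero hεw' hεw, ?_⟩
  · refine finrank_eq_one (⟨w, hw⟩ : 𝒜 m) (by simpa [Subtype.ext_iff] using hw0) ?_
    exact fun x => ⟨ε x / ε w, Subtype.ext (hspan x x.2)⟩
  · ext x
    have hmem : GradedAlgebra.proj 𝒜 m x ∈ 𝒜 m := by
      rw [GradedAlgebra.proj_apply]
      exact SetLike.coe_mem _
    rw [LinearMap.smul_apply, expectation_eq_proj_top m 𝒜 ε' hgraded' w hw hεw' x,
      expectation_eq_proj_top m 𝒜 ε hgraded w hw hεw x, ← hspan _ hmem]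
    simp only [map_smul, smul_eq_mul]
    field_simp
end

section
/- Let V be a finite-dimensional vector space over a field K and let N : V → V be a nilpotent endomorphism, and fix an integer n. Then there exists a unique increasing filtration (W_ℓ)_{ℓ∈ℤ} of V by subspaces, with W_ℓ = 0 for ℓ sufficiently small and W_ℓ = V for ℓ sufficiently large, such that N(W_ℓ) ⊆ W_{ℓ−2} for all ℓ, and such that for every ℓ ≥ 0 the map N^ℓ induces an isomorphism W_{n+ℓ}/W_{n+ℓ−1} ≅ W_{n−ℓ}/W_{n−ℓ−1} between graded pieces. -/
/-!
Existence is by the explicit formula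
`W_{n+ℓ} = ∑_{i ≥ 0} ker N^(i+1) ∩ im N^(i-ℓ)` (with `im N^j = V` for `j < 0`). It satisfies
`N W_ℓ ⊆ W_{ℓ-2}`, `ker N^ℓ ⊆ W_{n+ℓ-1}` for `ℓ ≥ 1`, and `W_{n-ℓ} = N^ℓ W_{n+ℓ}` on the nose.
The last equality gives surjectivity on graded pieces. For injectivity, if `N^ℓ x ∈ W_{n-ℓ-1}`,
write `N^ℓ x = N^(ℓ+1) w` with `w ∈ W_{n+ℓ+1}`; then `x = N w + (x - N w)` with
`N w ∈ W_{n+ℓ-1}` and `x - N w ∈ ker N^ℓ ⊆ W_{n+ℓ-1}`.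

For uniqueness, every filtration `W` with the required properties satisfies
`ker N^(ℓ+1) ⊆ W_{n+ℓ}` and `W_{n-ℓ} ⊆ N^ℓ W_{n+ℓ}`. Given two such filtrations `W` and `W'`,
the inclusion `W_{n+ℓ} ⊆ W'_{n+ℓ}` for `ℓ ≥ 0` follows by descending induction: for
`x ∈ W_{n+ℓ}` one has `N^(ℓ+1) x ∈ W_{n-ℓ-2} ⊆ N^(ℓ+2) W_{n+ℓ+2}`, so `x ∈ N W_{n+ℓ+2} + ker N^(ℓ+1)`,
and both summands lie in `W'_{n+ℓ}`. Applying `N^ℓ` gives the inclusion in negative degrees.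
-/

namespace MonodromyWeight

variable {K V : Type*} [Field K] [AddCommGroup V] [Module K V]

/-- `W` is a monodromy weight filtration of `N` centered at `n`. The last clause says that `N ^ ℓ`
is well defined, injective and surjective on graded pieces. -/
def IsWeightFiltration (N : Module.End K V) (n : ℤ) (W : ℤ → Submodule K V) : Prop :=
  Monotone W ∧
  (∃ a : ℤ, ∀ ℓ : ℤ, ℓ ≤ a → W ℓ = ⊥) ∧
  (∃ b : ℤ, ∀ ℓ : ℤ, b ≤ ℓ → W ℓ = ⊤) ∧
  (∀ ℓ : ℤ, (W ℓ).map N ≤ W (ℓ - 2)) ∧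
  (∀ ℓ : ℕ,
    (∀ x ∈ W (n + ℓ), (N ^ ℓ) x ∈ W (n - ℓ)) ∧
    (∀ x ∈ W (n + ℓ), (N ^ ℓ) x ∈ W (n - ℓ - 1) → x ∈ W (n + ℓ - 1)) ∧
    (∀ y ∈ W (n - ℓ), ∃ x ∈ W (n + ℓ), (N ^ ℓ) x - y ∈ W (n - ℓ - 1)))

/-- The filtration `∑_{i ≥ 0} ker N^(i+1) ∩ im N^(i+n-ℓ)`. The truncation `Int.toNat` encodes the
convention that the image of a negative power is all of `V`. -/
def weightFiltration (N : Module.End K V) (n ℓ : ℤ) : Submodule K V :=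
  ⨆ i : ℕ, LinearMap.ker (N ^ (i + 1)) ⊓ LinearMap.range (N ^ (i + n - ℓ).toNat)

lemma pow_mem {N : Module.End K V} {W : ℤ → Submodule K V}
    (hW : ∀ ℓ : ℤ, (W ℓ).map N ≤ W (ℓ - 2)) (k : ℕ) (ℓ : ℤ) (x : V) (hx : x ∈ W ℓ) :
    (N ^ k) x ∈ W (ℓ - 2 * k) := by
  induction k with
  | zero => simpa using hx
  | succ k ih =>
    rw [pow_succ', Module.End.mul_apply]
    have h := hW _ (Submodule.mem_map_of_mem ih)
    have e : ℓ - 2 * (k : ℤ) - 2 = ℓ - 2 * ((k + 1 : ℕ) : ℤ) := by push_cast; ring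
    rwa [e] at h

/-! ### Existence -/

lemma mem_weightFiltration (N : Module.End K V) (n ℓ : ℤ) (i j : ℕ) (hj : i + n - ℓ ≤ j) (z : V)
    (hz : (N ^ (i + 1 + j)) z = 0) : (N ^ j) z ∈ weightFiltration N n ℓ := by
  refine Submodule.mem_iSup_of_mem i ⟨?_, ?_⟩
  · rw [SetLike.mem_coe, LinearMap.mem_ker, ← Module.End.mul_apply, ← pow_add, hz]
  · obtain ⟨k, rfl⟩ := Nat.exists_eq_add_of_le (show (i + n - ℓ).toNat ≤ j by omega)
    exact ⟨(N ^ k) z, by rw [← Module.End.mul_apply, ← pow_add]⟩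

/-- Extensionality for inclusions of the explicit filtration: its elements are sums of
vectors `N ^ j z` with `N ^ (i + 1 + j) z = 0`, where `j` is the truncation of `i + n - ℓ`. -/
lemma weightFiltration_le {N : Module.End K V} {n ℓ : ℤ} {S : Submodule K V}
    (h : ∀ (i j : ℕ) (z : V), j = (i + n - ℓ).toNat → (N ^ (i + 1 + j)) z = 0 → (N ^ j) z ∈ S) :
    weightFiltration N n ℓ ≤ S := by
  refine iSup_le fun i => ?_
  rintro _ ⟨hy, z, rfl⟩
  refine h i _ z rfl ?_
  rw [pow_add, Module.End.mul_apply]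
  exact hy

lemma weightFiltration_mono (N : Module.End K V) (n : ℤ) : Monotone (weightFiltration N n) := by
  intro a b hab
  refine weightFiltration_le fun i j z hj hz => ?_
  exact mem_weightFiltration N n b i j (by omega) z hz

lemma weightFiltration_map (N : Module.End K V) (n ℓ : ℤ) :
    (weightFiltration N n ℓ).map N ≤ weightFiltration N n (ℓ - 2) := by
  rw [Submodule.map_le_iff_le_comap]
  refine weightFiltration_le fun i j z hj hz => ?_
  rw [Submodule.mem_comap, ← Module.End.mul_apply, ← pow_succ']
  rcases i with _ | i
  · rw [show j + 1 = 0 + 1 + j by omega, hz]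
    exact zero_mem _
  · refine mem_weightFiltration N n _ i (j + 1) (by push_cast at hj ⊢; omega) z ?_
    rw [show i + 1 + (j + 1) = i + 1 + 1 + j by omega, hz]

lemma ker_le_weightFiltration (N : Module.End K V) (n : ℤ) (i : ℕ) (x : V)
    (hx : (N ^ (i + 1)) x = 0) : x ∈ weightFiltration N n (n + i) := by
  simpa using mem_weightFiltration N n (n + i) i 0 (by push_cast; omega) x (by simpa using hx)

lemma weightFiltration_le_map_pow (N : Module.End K V) (n : ℤ) (m : ℕ) :
    weightFiltration N n (n - m) ≤ (weightFiltration N n (n + m)).map (N ^ m) := by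
  refine weightFiltration_le fun i j z hj hz => ?_
  obtain rfl : j = m + i := by omega
  refine ⟨(N ^ i) z, ?_, by rw [← Module.End.mul_apply, ← pow_add]⟩
  refine mem_weightFiltration N n _ (i + m) i (by push_cast; omega) z ?_
  rw [show i + m + 1 + i = i + 1 + (m + i) by omega, hz]

lemma isWeightFiltration_weightFiltration (N : Module.End K V) (hN : IsNilpotent N) (n : ℤ) :
    IsWeightFiltration N n (weightFiltration N n) := by
  obtain ⟨d, hd⟩ := hN
  have hd' : ∀ k, d ≤ k → N ^ k = 0 := fun k hk => pow_eq_zero_of_le hk hd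
  refine ⟨weightFiltration_mono N n, ⟨n - d, fun ℓ hℓ => ?_⟩, ⟨n + d, fun ℓ hℓ => ?_⟩,
    weightFiltration_map N n, fun m => ⟨fun x hx => ?_, fun x hx h => ?_, fun y hy => ?_⟩⟩
  · refine eq_bot_iff.2 (weightFiltration_le fun i j z hj _ => ?_)
    simp [hd' j (by omega)]
  · refine eq_top_iff.2 fun x _ => weightFiltration_mono N n hℓ ?_
    exact ker_le_weightFiltration N n d x (by simp [hd' (d + 1) (by omega)])
  · have := pow_mem (weightFiltration_map N n) m _ x hx
    rwa [show n + (m : ℤ) - 2 * m = n - m by ring] at this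
  · rcases m with _ | m
    · simpa using h
    · have h1 := weightFiltration_le_map_pow N n (m + 1 + 1)
      rw [show n - ((m + 1 + 1 : ℕ) : ℤ) = n - ((m + 1 : ℕ) : ℤ) - 1 by push_cast; ring] at h1
      obtain ⟨w, hw, hwx⟩ := h1 h
      have hNw := weightFiltration_map N n _ (Submodule.mem_map_of_mem hw)
      rw [show n + ((m + 1 + 1 : ℕ) : ℤ) - 2 = n + m by push_cast; ring] at hNw
      have hk : x - N w ∈ weightFiltration N n (n + m) := by
        refine ker_le_weightFiltration N n m _ ?_
        rw [map_sub, ← Module.End.mul_apply, ← pow_succ, hwx, sub_self]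
      rw [show n + ((m + 1 : ℕ) : ℤ) - 1 = n + m by push_cast; ring]
      simpa using add_mem hk hNw
  · obtain ⟨x, hx, rfl⟩ := weightFiltration_le_map_pow N n m hy
    exact ⟨x, hx, by simp⟩

/-! ### Uniqueness -/

namespace IsWeightFiltration

variable {N : Module.End K V} {n : ℤ} {W W' : ℤ → Submodule K V}

/-- A vector killed by `N ^ (i + 1)` lies in some `W (n + m)`; injectivity on graded pieces lowers
`m` down to `i`. -/
lemma ker_le (hW : IsWeightFiltration N n W) (i : ℕ) (x : V) (hx : (N ^ (i + 1)) x = 0) :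
    x ∈ W (n + i) := by
  obtain ⟨-, -, ⟨b, hb⟩, -, hgr⟩ := hW
  have key : ∀ k : ℕ, x ∈ W (n + (i + k : ℕ)) → x ∈ W (n + i) := by
    intro k
    induction k with
    | zero => exact id
    | succ k ih =>
      intro h
      apply ih
      have h0 : (N ^ (i + (k + 1))) x = 0 := by
        rw [show i + (k + 1) = k + (i + 1) by omega, pow_add, Module.End.mul_apply, hx, map_zero]
      have := (hgr _).2.1 x h (by rw [h0]; exact zero_mem _)
      rwa [show n + ((i + (k + 1) : ℕ) : ℤ) - 1 = n + (i + k : ℕ) by push_cast; ring] at this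
  refine key (b - n).toNat ?_
  rw [hb _ (by push_cast; omega)]
  trivial

/-- Surjectivity on graded pieces improves to surjectivity on the filtration, by induction from
the degrees where `W` vanishes. -/
lemma le_map_pow (hW : IsWeightFiltration N n W) (m : ℕ) :
    W (n - m) ≤ (W (n + m)).map (N ^ m) := by
  obtain ⟨hmono, ⟨a, ha⟩, -, hN, hgr⟩ := hW
  have key : ∀ k m : ℕ, n - m ≤ a + k → W (n - m) ≤ (W (n + m)).map (N ^ m) := by
    intro k
    induction k with
    | zero =>
      intro m hm
      rw [ha (n - m) (by omega)]
      exact bot_le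
    | succ k ih =>
      intro m hm y hy
      obtain ⟨x, hx, hxy⟩ := (hgr m).2.2 y hy
      have ih := ih (m + 1) (by push_cast at hm ⊢; omega)
      rw [show n - ((m + 1 : ℕ) : ℤ) = n - m - 1 by push_cast; ring] at ih
      obtain ⟨w, hw, hwx⟩ := ih hxy
      have hNw := hN _ (Submodule.mem_map_of_mem hw)
      refine ⟨x - N w, sub_mem hx (hmono (by push_cast; omega) hNw), ?_⟩
      rw [map_sub, ← Module.End.mul_apply, ← pow_succ, hwx, sub_sub_cancel]
  exact key (n - a).toNat m (by omega)

lemma le_of_nonneg (hW : IsWeightFiltration N n W) (hW' : IsWeightFiltration N n W') (m : ℕ) :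
    W (n + m) ≤ W' (n + m) := by
  obtain ⟨b, hb⟩ := hW'.2.2.1
  have key : ∀ k m : ℕ, b ≤ n + m + k → W (n + m) ≤ W' (n + m) := by
    intro k
    induction k with
    | zero =>
      intro m hm
      rw [hb (n + m) (by omega)]
      exact le_top
    | succ k ih =>
      intro m hm x hx
      have h1 := pow_mem hW.2.2.2.1 (m + 1) _ x hx
      rw [show n + (m : ℤ) - 2 * ((m + 1 : ℕ) : ℤ) = n - (m + 2 : ℕ) by push_cast; ring] at h1
      obtain ⟨w, hw, hwx⟩ := hW.le_map_pow (m + 2) h1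
      have hw' := ih (m + 2) (by push_cast at hm ⊢; omega) hw
      have hNw := hW'.2.2.2.1 _ (Submodule.mem_map_of_mem hw')
      rw [show n + ((m + 2 : ℕ) : ℤ) - 2 = n + m by push_cast; ring] at hNw
      have hk : x - N w ∈ W' (n + m) := by
        refine hW'.ker_le m _ ?_
        rw [map_sub, ← Module.End.mul_apply, ← pow_succ, hwx, sub_self]
      simpa using add_mem hk hNw
  exact key (b - n).toNat m (by omega)

lemma le (hW : IsWeightFiltration N n W) (hW' : IsWeightFiltration N n W') : W ≤ W' := by
  intro ℓ
  rcases le_total n ℓ with h | h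
  · obtain ⟨m, rfl⟩ := Int.exists_add_of_le h
    exact le_of_nonneg hW hW' m
  · obtain ⟨m, hm⟩ := Int.exists_add_of_le h
    obtain rfl : ℓ = n - m := by omega
    intro y hy
    obtain ⟨x, hx, rfl⟩ := hW.le_map_pow m hy
    exact (hW'.2.2.2.2 m).1 x (le_of_nonneg hW hW' m hx)

end IsWeightFiltration

end MonodromyWeight

/-- Existence and uniqueness of the monodromy weight filtration centered at `n`
associated to a nilpotent endomorphism `N` of a finite-dimensional vector space:
an increasing exhaustive filtration `W` with `N(W_ℓ) ⊆ W_{ℓ-2}` such that for each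
`ℓ ≥ 0` the map `N^ℓ` induces an isomorphism
`W_{n+ℓ}/W_{n+ℓ-1} ≅ W_{n-ℓ}/W_{n-ℓ-1}`. -/
theorem monodromy_weight_filtration {K V : Type*} [Field K] [AddCommGroup V]
    [Module K V] [FiniteDimensional K V]
    (N : Module.End K V) (hN : IsNilpotent N) (n : ℤ) :
    ∃! W : ℤ → Submodule K V,
      Monotone W ∧
      (∃ a : ℤ, ∀ ℓ : ℤ, ℓ ≤ a → W ℓ = ⊥) ∧
      (∃ b : ℤ, ∀ ℓ : ℤ, b ≤ ℓ → W ℓ = ⊤) ∧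
      (∀ ℓ : ℤ, (W ℓ).map N ≤ W (ℓ - 2)) ∧
      (∀ ℓ : ℕ,
        (∀ x ∈ W (n + ℓ), (N ^ ℓ) x ∈ W (n - ℓ)) ∧
        (∀ x ∈ W (n + ℓ), (N ^ ℓ) x ∈ W (n - ℓ - 1) → x ∈ W (n + ℓ - 1)) ∧
        (∀ y ∈ W (n - ℓ), ∃ x ∈ W (n + ℓ), (N ^ ℓ) x - y ∈ W (n - ℓ - 1))) := by
  refine ⟨MonodromyWeight.weightFiltration N n,
    MonodromyWeight.isWeightFiltration_weightFiltration N hN n, fun W hW => ?_⟩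
  have hF := MonodromyWeight.isWeightFiltration_weightFiltration N hN n
  exact le_antisymm (MonodromyWeight.IsWeightFiltration.le hW hF)
    (MonodromyWeight.IsWeightFiltration.le hF hW)
end

section
/- There exist infinitely many two-dimensional complex linear subspaces L ⊆ ℂ⁵ such that every point (x₀, x₁, x₂, x₃, x₄) ∈ L satisfies x₀⁵ + x₁⁵ + x₂⁵ + x₃⁵ + x₄⁵ = 0. In fact, for every (a, b, c) ∈ ℂ³ with a⁵ + b⁵ + c⁵ = 0 and (a,b,c) ≠ 0, the subspace L_{a,b,c} := {(u, −u, av, bv, cv) : u, v ∈ ℂ} is such a subspace, and distinct projective points [a : b : c] give distinct subspaces. -/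
open scoped BigOperators

/-!
On `(u, -u, av, bv, cv)` the sum of fifth powers is `u⁵ - u⁵ + (a⁵ + b⁵ + c⁵) v⁵ = 0`, and the
parametrization is injective as soon as `(a, b, c) ≠ 0`, so its range `fermatLine a b c` is a plane
in the cone. The plane determines `[a : b : c]`, because its vectors with `u = 0` are
the multiples of `(0, 0, a, b, c)` (`exists_scale_of_lines_eq`). Infinitely many planes arise from
`(1, s, r)` with `s : ℂ` arbitrary and `r` a fifth root of `-(1 + s⁵)`: normalizing the first
coordinate to `1` makes distinct `s` give distinct projective points.
-/

/-- The linear parametrization `(u, v) ↦ (u, -u, av, bv, cv)`. -/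
def fermatParam (a b c : ℂ) : ℂ × ℂ →ₗ[ℂ] (Fin 5 → ℂ) where
  toFun p := ![p.1, -p.1, a * p.2, b * p.2, c * p.2]
  map_add' p q := by
    ext i
    fin_cases i <;> simp <;> ring
  map_smul' t p := by
    ext i
    fin_cases i <;> simp <;> ring

/-- The subspace `L_{a,b,c} = {(u, -u, av, bv, cv)}` of `ℂ⁵`; it is a plane only for
`(a, b, c) ≠ 0`. -/
def fermatLine (a b c : ℂ) : Submodule ℂ (Fin 5 → ℂ) :=
  LinearMap.range (fermatParam a b c)

lemma coe_fermatLine (a b c : ℂ) :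
    (fermatLine a b c : Set (Fin 5 → ℂ)) =
      {x | ∃ u v : ℂ, x = ![u, -u, a * v, b * v, c * v]} := by
  ext x
  simp [fermatLine, fermatParam, eq_comm]

lemma finrank_fermatLine {a b c : ℂ} (h : (a, b, c) ≠ (0, 0, 0)) :
    Module.finrank ℂ (fermatLine a b c) = 2 := by
  have hinj : Function.Injective (fermatParam a b c) := by
    rw [injective_iff_map_eq_zero]
    rintro ⟨u, v⟩ huv
    have h0 : u = 0 := congrFun huv 0
    have h2 : a * v = 0 := congrFun huv 2
    have h3 : b * v = 0 := congrFun huv 3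
    have h4 : c * v = 0 := congrFun huv 4
    have hv : v = 0 := by
      by_contra hv
      simp_all
    simp [h0, hv]
  rw [fermatLine, LinearMap.finrank_range_of_inj hinj]
  simp

lemma sum_pow_five_of_mem_fermatLine {a b c : ℂ} (h : a ^ 5 + b ^ 5 + c ^ 5 = 0)
    {x : Fin 5 → ℂ} (hx : x ∈ fermatLine a b c) : ∑ i : Fin 5, x i ^ 5 = 0 := by
  obtain ⟨⟨u, v⟩, rfl⟩ := hx
  simp only [fermatParam, LinearMap.coe_mk, AddHom.coe_mk, Fin.sum_univ_five]
  change u ^ 5 + (-u) ^ 5 + (a * v) ^ 5 + (b * v) ^ 5 + (c * v) ^ 5 = 0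
  linear_combination v ^ 5 * h

/-- The set `L_{a,b,c}` determines the projective point `[a : b : c]`. -/
lemma exists_scale_of_lines_eq {a b c a' b' c' : ℂ} (h' : (a', b', c') ≠ (0, 0, 0))
    (h : {x : Fin 5 → ℂ | ∃ u v : ℂ, x = ![u, -u, a * v, b * v, c * v]} =
      {x : Fin 5 → ℂ | ∃ u v : ℂ, x = ![u, -u, a' * v, b' * v, c' * v]}) :
    ∃ t : ℂ, t ≠ 0 ∧ a' = t * a ∧ b' = t * b ∧ c' = t * c := by
  have hmem : ![0, -0, a' * 1, b' * 1, c' * 1] ∈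
      {x : Fin 5 → ℂ | ∃ u v : ℂ, x = ![u, -u, a * v, b * v, c * v]} := by
    rw [h]
    exact ⟨0, 1, rfl⟩
  obtain ⟨u, t, ht⟩ := hmem
  have h2 : a' * 1 = a * t := congrFun ht 2
  have h3 : b' * 1 = b * t := congrFun ht 3
  have h4 : c' * 1 = c * t := congrFun ht 4
  refine ⟨t, ?_, by linear_combination h2, by linear_combination h3, by linear_combination h4⟩
  rintro rfl
  rw [mul_one, mul_zero] at h2 h3 h4
  exact h' (by rw [h2, h3, h4])

/-- There are infinitely many two-dimensional complex linear subspaces of `ℂ⁵` contained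
in the affine cone over the Fermat quintic threefold.  For every `(a,b,c) ≠ 0` with
`a⁵ + b⁵ + c⁵ = 0`, the set `L_{a,b,c} = {(u, -u, av, bv, cv)}` is such a subspace, and
distinct projective points `[a:b:c]` give distinct subspaces. -/
theorem fermat_quintic_infinitely_many_lines :
    {L : Submodule ℂ (Fin 5 → ℂ) |
        Module.finrank ℂ L = 2 ∧ ∀ x ∈ L, ∑ i : Fin 5, x i ^ 5 = 0}.Infinite ∧
    (∀ a b c : ℂ, a ^ 5 + b ^ 5 + c ^ 5 = 0 → (a, b, c) ≠ (0, 0, 0) →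
      ∃ L : Submodule ℂ (Fin 5 → ℂ),
        (L : Set (Fin 5 → ℂ)) = {x | ∃ u v : ℂ, x = ![u, -u, a * v, b * v, c * v]} ∧
        Module.finrank ℂ L = 2 ∧
        ∀ x ∈ L, ∑ i : Fin 5, x i ^ 5 = 0) ∧
    (∀ a b c a' b' c' : ℂ,
      a ^ 5 + b ^ 5 + c ^ 5 = 0 → (a, b, c) ≠ (0, 0, 0) →
      a' ^ 5 + b' ^ 5 + c' ^ 5 = 0 → (a', b', c') ≠ (0, 0, 0) →
      {x : Fin 5 → ℂ | ∃ u v : ℂ, x = ![u, -u, a * v, b * v, c * v]} =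
        {x : Fin 5 → ℂ | ∃ u v : ℂ, x = ![u, -u, a' * v, b' * v, c' * v]} →
      ∃ t : ℂ, t ≠ 0 ∧ a' = t * a ∧ b' = t * b ∧ c' = t * c) := by
  refine ⟨?_, fun a b c h h0 => ⟨fermatLine a b c, coe_fermatLine a b c, finrank_fermatLine h0,
    fun x hx => sum_pow_five_of_mem_fermatLine h hx⟩,
    fun a b c a' b' c' _ _ _ h0' h => exists_scale_of_lines_eq h0' h⟩
  have hroot : ∀ s : ℂ, ∃ r : ℂ, r ^ 5 = -(1 + s ^ 5) := fun s =>
    IsAlgClosed.exists_pow_nat_eq _ (by norm_num)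
  choose r hr using hroot
  have hne : ∀ s : ℂ, ((1 : ℂ), s, r s) ≠ (0, 0, 0) := by simp
  refine Set.infinite_of_injective_forall_mem (f := fun s : ℂ => fermatLine 1 s (r s)) ?_
    fun s => ⟨finrank_fermatLine (hne s), fun x hx =>
      sum_pow_five_of_mem_fermatLine (by rw [hr s]; ring) hx⟩
  intro s q hs
  have hset := congrArg (fun L : Submodule ℂ (Fin 5 → ℂ) => (L : Set (Fin 5 → ℂ))) hs
  simp only [coe_fermatLine] at hset
  obtain ⟨t, -, h1, h2, -⟩ := exists_scale_of_lines_eq (hne q) hset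
  -- The first coordinates are both `1`, which forces the scaling factor `t` to be `1`.
  linear_combination s * h1 - h2
end
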